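/- z''(1/2) = Γ(1/4)^2 / (2π^{3/2}) and z'''(1/2) = 36√π / Γ(1/4)^2, where z(x) = ₂F₁(1/2, 1/2; 1; x). -/

import Mathlib

/-- Ascending Pochhammer symbol `(a)_n = a(a+1)⋯(a+n-1)`. -/
noncomputable def poch (a : ℝ) (n : ℕ) : ℝ := ∏ i ∈ Finset.range n, (a + i)

/-- Gaussian hypergeometric series `₂F₁(a,b;c;x)`. -/
noncomputable def hypF (a b c x : ℝ) : ℝ :=
  ∑' m : ℕ, poch a m * poch b m / poch c m * x ^ m / m.factorial

/-!
Differentiating the series gives `F(a,b;c)⁽ⁿ⁾ = (a)ₙ(b)ₙ/(c)ₙ · F(a+n,b+n;c+n)`, and this shift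
preserves the relation `c = (a+b+1)/2` under which Gauss's second theorem evaluates `F(a,b;c;1/2)`.
Since `a = b = 1/2`, `c = 1` satisfies it, every derivative of `z` at `1/2` is an explicit quotient
of Gamma values. Gauss's second theorem comes from Euler's integral for `F(a,b;c;1/2)`, which the
substitutions `t = 2s/(1+s)` and `u = s²` turn into a Beta integral.
-/

open Real Set Filter Topology MeasureTheory ProbabilityTheory

section Pochhammer

variable (a : ℝ) (n : ℕ)

lemma poch_succ : poch a (n + 1) = poch a n * (a + n) :=
  Finset.prod_range_succ _ n

lemma poch_succ_left : poch a (n + 1) = a * poch (a + 1) n := by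
  simp [poch, Finset.prod_range_succ', mul_comm a, add_assoc, add_comm (1 : ℝ)]

lemma poch_eq_ascPochhammer_eval : poch a n = (ascPochhammer ℝ n).eval a := by
  induction n with
  | zero => simp [poch]
  | succ n ih => rw [poch_succ, ascPochhammer_succ_eval, ih]

lemma poch_div_factorial_eq_choose : poch a n / n.factorial = Ring.choose (a + n - 1) n := by
  rw [← Ring.multichoose_eq, div_eq_iff (by positivity), mul_comm, ← nsmul_eq_mul,
    Ring.factorial_nsmul_multichoose_eq_ascPochhammer, Polynomial.ascPochhammer_smeval_eq_eval,
    poch_eq_ascPochhammer_eval]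

variable {a}

lemma poch_pos (ha : 0 < a) : 0 < poch a n :=
  Finset.prod_pos fun _ _ ↦ by positivity

lemma Gamma_add_natCast_eq_poch_mul (ha : 0 < a) : Gamma (a + n) = poch a n * Gamma a := by
  induction n with
  | zero => simp [poch]
  | succ n ih =>
    rw [Nat.cast_succ, ← add_assoc, Gamma_add_one (by positivity), ih, poch_succ]
    ring

lemma hasSum_poch_div_factorial_mul_pow (a : ℝ) {x : ℝ} (hx : |x| < 1) :
    HasSum (fun m ↦ poch a m / m.factorial * x ^ m) ((1 - x) ^ (-a)) := by
  have hball : x ∈ Metric.eball (0 : ℝ) 1 := by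
    rw [← ENNReal.ofReal_one, Metric.eball_ofReal]
    simpa using hx
  have h := (one_div_one_sub_rpow_hasFPowerSeriesOnBall_zero a).hasSum hball
  simp only [FormalMultilinearSeries.ofScalars_apply_eq, smul_eq_mul, zero_add] at h
  simpa only [poch_div_factorial_eq_choose, rpow_neg (by linarith [(abs_lt.mp hx).2] : 0 ≤ 1 - x),
    one_div] using h

end Pochhammer

section Derivatives

variable (a b c : ℝ)

/-- The `m`-th term of the hypergeometric series defining `hypF a b c x`, named so that convergence
and termwise differentiation can be stated. If `c = -k` is a nonpositive integer, the convention
`y / 0 = 0` makes the terms with `m > k` vanish. -/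
noncomputable def hypTerm (x : ℝ) (m : ℕ) : ℝ :=
  poch a m * poch b m / poch c m * x ^ m / m.factorial

lemma hypTerm_succ (x : ℝ) (m : ℕ) :
    hypTerm a b c x (m + 1) =
      (a + m) / (c + m) * ((b + m) / (1 + m)) * x * hypTerm a b c x m := by
  simp only [hypTerm, poch_succ, pow_succ, Nat.factorial_succ, Nat.cast_mul, Nat.cast_succ,
    add_comm (m : ℝ) 1, div_eq_mul_inv, mul_inv]
  ring

variable {x : ℝ}

lemma summable_hypTerm (hx : |x| < 1) : Summable (hypTerm a b c x) := by
  obtain ⟨r, hxr, hr⟩ := exists_between hx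
  have hratio : Tendsto (fun m : ℕ ↦ |(a + m) / (c + m) * ((b + m) / (1 + m)) * x|) atTop
      (𝓝 |x|) := by
    have hquot (u v : ℝ) : Tendsto (fun m : ℕ ↦ (u + m) / (v + m)) atTop (𝓝 1) := by
      simpa using tendsto_add_mul_div_add_mul_atTop_nhds u v (1 : ℝ) one_ne_zero
    simpa using (((hquot a c).mul (hquot b 1)).mul_const x).abs
  refine summable_of_ratio_norm_eventually_le hr ?_
  filter_upwards [hratio.eventually_lt_const hxr] with m hm
  rw [hypTerm_succ, norm_mul]
  exact mul_le_mul_of_nonneg_right hm.le (norm_nonneg _)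

lemma hasDerivAt_hypTerm_succ (m : ℕ) (x : ℝ) :
    HasDerivAt (fun y ↦ hypTerm a b c y (m + 1))
      (a * b / c * hypTerm (a + 1) (b + 1) (c + 1) x m) x := by
  have h := (((hasDerivAt_pow (m + 1) x).const_mul
    (poch a (m + 1) * poch b (m + 1) / poch c (m + 1))).div_const ((m + 1).factorial : ℝ))
  refine h.congr_deriv ?_
  simp only [hypTerm, poch_succ_left, Nat.factorial_succ, Nat.add_sub_cancel, div_eq_mul_inv,
    mul_inv]
  push_cast
  field_simp

lemma abs_hypTerm_le {r : ℝ} (hxr : |x| ≤ r) (m : ℕ) :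
    |hypTerm a b c x m| ≤ |hypTerm a b c r m| := by
  have hr : |x| ≤ |r| := hxr.trans (le_abs_self r)
  simp only [hypTerm, abs_div, abs_mul, abs_pow]
  gcongr

theorem hasDerivAt_hypF (hx : |x| < 1) :
    HasDerivAt (hypF a b c) (a * b / c * hypF (a + 1) (b + 1) (c + 1) x) x := by
  obtain ⟨r, hxr, hr⟩ := exists_between hx
  have hr0 : 0 < r := (abs_nonneg x).trans_lt hxr
  have hr1 : |r| < 1 := by rwa [abs_of_pos hr0]
  have htail : HasDerivAt (fun y ↦ ∑' m, hypTerm a b c y (m + 1))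
      (∑' m, a * b / c * hypTerm (a + 1) (b + 1) (c + 1) x m) x := by
    refine hasDerivAt_tsum_of_isPreconnected (t := Metric.ball 0 r) (y₀ := x)
      ((summable_hypTerm (a + 1) (b + 1) (c + 1) hr1).abs.mul_left |a * b / c|) Metric.isOpen_ball
      (convex_ball _ _).isPreconnected (fun m y _ ↦ hasDerivAt_hypTerm_succ a b c m y)
      (fun m y hy ↦ ?_) (by simpa using hxr)
      ((summable_nat_add_iff 1).mpr (summable_hypTerm a b c hx)) (by simpa using hxr)
    rw [norm_mul]
    exact mul_le_mul_of_nonneg_left (abs_hypTerm_le _ _ _ (mem_ball_zero_iff.mp hy).le m)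
      (norm_nonneg _)
  rw [tsum_mul_left] at htail
  refine (htail.const_add 1).congr_of_eventuallyEq ?_
  filter_upwards [continuous_abs.continuousAt.eventually_lt_const hx] with y hy
  rw [show hypF a b c y = ∑' m, hypTerm a b c y m from rfl,
    (summable_hypTerm a b c hy).tsum_eq_zero_add]
  simp [hypTerm, poch]

theorem iteratedDeriv_hypF (n : ℕ) (hx : |x| < 1) :
    iteratedDeriv n (hypF a b c) x =
      poch a n * poch b n / poch c n * hypF (a + n) (b + n) (c + n) x := by
  induction n generalizing x with
  | zero => simp [poch]
  | succ n ih =>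
    have heq : iteratedDeriv n (hypF a b c) =ᶠ[𝓝 x]
        fun y ↦ poch a n * poch b n / poch c n * hypF (a + n) (b + n) (c + n) y := by
      filter_upwards [continuous_abs.continuousAt.eventually_lt_const hx] with y hy using ih hy
    rw [iteratedDeriv_succ, heq.deriv_eq,
      ((hasDerivAt_hypF (a + n) (b + n) (c + n) hx).const_mul _).deriv]
    simp only [poch_succ, Nat.cast_succ, add_assoc, div_eq_mul_inv, mul_inv]
    ring

end Derivatives

section EulerIntegral

lemma integral_rpow_mul_one_sub_rpow {u v : ℝ} (hu : 0 < u) (hv : 0 < v) :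
    ∫ t in (0 : ℝ)..1, t ^ (u - 1) * (1 - t) ^ (v - 1) = beta u v := by
  rw [beta_eq_betaIntegralReal u v hu hv, Complex.betaIntegral,
    ← Complex.ofReal_re (∫ _ in _.._, _), ← intervalIntegral.integral_ofReal]
  congr 1
  refine intervalIntegral.integral_congr fun t ht ↦ ?_
  rw [uIcc_of_le zero_le_one] at ht
  simp [Complex.ofReal_cpow ht.1, Complex.ofReal_cpow (sub_nonneg.mpr ht.2)]

lemma intervalIntegrable_rpow_mul_one_sub_rpow {u v : ℝ} (hu : 0 < u) (hv : 0 < v) :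
    IntervalIntegrable (fun t : ℝ ↦ t ^ (u - 1) * (1 - t) ^ (v - 1)) volume 0 1 :=
  intervalIntegral.intervalIntegrable_of_integral_ne_zero <| by
    rw [integral_rpow_mul_one_sub_rpow hu hv]
    exact (beta_pos hu hv).ne'

lemma beta_add_natCast_left {u v : ℝ} (hu : 0 < u) (hv : 0 < v) (m : ℕ) :
    beta (u + m) v = beta u v * (poch u m / poch (u + v) m) := by
  rw [beta, beta, add_right_comm, Gamma_add_natCast_eq_poch_mul m hu,
    Gamma_add_natCast_eq_poch_mul m (add_pos hu hv)]
  ring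

lemma integral_rpow_mul_one_sub_rpow_mul_pow {u v : ℝ} (hu : 0 < u) (hv : 0 < v) (m : ℕ) :
    ∫ t in (0 : ℝ)..1, t ^ (u - 1) * (1 - t) ^ (v - 1) * t ^ m =
      beta u v * (poch u m / poch (u + v) m) := by
  rw [← beta_add_natCast_left hu hv, ← integral_rpow_mul_one_sub_rpow (by positivity) hv]
  refine intervalIntegral.integral_congr_ae (.of_forall fun t ht ↦ ?_)
  rw [uIoc_of_le zero_le_one] at ht
  rw [add_sub_right_comm, rpow_add_natCast ht.1.ne']
  ring

theorem beta_mul_hypF_eq_integral (a : ℝ) {b c x : ℝ} (hb : 0 < b) (hbc : b < c) (hx : |x| < 1) :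
    beta b (c - b) * hypF a b c x =
      ∫ t in (0 : ℝ)..1, t ^ (b - 1) * (1 - t) ^ (c - b - 1) * (1 - x * t) ^ (-a) := by
  have hcb : 0 < c - b := sub_pos.mpr hbc
  set w : ℝ → ℝ := fun t ↦ t ^ (b - 1) * (1 - t) ^ (c - b - 1)
  set coeff : ℕ → ℝ := fun m ↦ poch a m / m.factorial * x ^ m
  have hcoeff : Summable fun m ↦ |coeff m| := (hasSum_poch_div_factorial_mul_pow a hx).summable.abs
  have hterm (m : ℕ) : ∫ t in (0 : ℝ)..1, w t * (coeff m * t ^ m) =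
      beta b (c - b) * hypTerm a b c x m := by
    simp only [mul_left_comm (w _), intervalIntegral.integral_const_mul, w,
      integral_rpow_mul_one_sub_rpow_mul_pow hb hcb, add_sub_cancel, coeff, hypTerm]
    ring
  have hsum : HasSum (fun m ↦ ∫ t in (0 : ℝ)..1, w t * (coeff m * t ^ m))
      (∫ t in (0 : ℝ)..1, w t * (1 - x * t) ^ (-a)) := by
    refine intervalIntegral.hasSum_integral_of_dominated_convergence (fun m t ↦ |w t| * |coeff m|)
      (fun m ↦ by fun_prop) (fun m ↦ .of_forall fun t ht ↦ ?_)
      (.of_forall fun t _ ↦ hcoeff.mul_left _) ?_ (.of_forall fun t ht ↦ ?_)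
    · rw [uIoc_of_le zero_le_one] at ht
      have htm : |t ^ m| ≤ 1 := by
        rw [abs_of_nonneg (pow_nonneg ht.1.le m)]
        exact pow_le_one₀ ht.1.le ht.2
      simp only [norm_eq_abs, abs_mul (w t), abs_mul (coeff m)]
      exact mul_le_mul_of_nonneg_left (mul_le_of_le_one_right (abs_nonneg _) htm) (abs_nonneg _)
    · simp only [tsum_mul_left]
      exact (intervalIntegrable_rpow_mul_one_sub_rpow hb hcb).abs.mul_const _
    · rw [uIoc_of_le zero_le_one] at ht
      have hxt : |x * t| < 1 := by
        rw [abs_mul, abs_of_pos ht.1]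
        exact (mul_le_of_le_one_right (abs_nonneg x) ht.2).trans_lt hx
      simpa only [coeff, mul_pow, mul_assoc] using
        (hasSum_poch_div_factorial_mul_pow a hxt).mul_left (w t)
  simp only [hterm] at hsum
  exact ((summable_hypTerm a b c hx).hasSum.mul_left _).unique hsum

end EulerIntegral

section GaussSecond

lemma integral_rpow_mul_one_sub_sq_rpow {u v : ℝ} (hu : 0 < u) (hv : 0 < v) :
    ∫ s in (0 : ℝ)..1, s ^ (u - 1) * (1 - s ^ 2) ^ (v - 1) = beta (u / 2) v / 2 := by
  have hsubst := intervalIntegral.integral_comp_mul_deriv_of_deriv_nonneg (a := 0) (b := 1)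
    (f := fun s : ℝ ↦ s ^ 2) (f' := fun s ↦ 2 * s)
    (g := fun y ↦ y ^ (u / 2 - 1) * (1 - y) ^ (v - 1)) (by fun_prop)
    (fun s _ ↦ by simpa using hasDerivAt_pow 2 s)
    (fun s hs ↦ by rw [min_eq_left zero_le_one] at hs; linarith [hs.1])
  simp only [Function.comp_def, ne_eq, OfNat.ofNat_ne_zero, not_false_eq_true, zero_pow, one_pow,
    integral_rpow_mul_one_sub_rpow (half_pos hu) hv] at hsubst
  rw [← hsubst, ← intervalIntegral.integral_div]
  refine intervalIntegral.integral_congr_ae (.of_forall fun s hs ↦ ?_)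
  rw [uIoc_of_le zero_le_one] at hs
  have hpow : (s ^ 2) ^ (u / 2 - 1) * s = s ^ (u - 1) := by
    rw [← rpow_natCast, ← rpow_mul hs.1.le, ← rpow_add_one hs.1.ne']
    congr 1
    push_cast
    ring
  rw [← hpow]
  ring

lemma integral_euler_one_half (a b : ℝ) :
    ∫ t in (0 : ℝ)..1, t ^ (b - 1) * (1 - t) ^ ((a - b + 1) / 2 - 1) * (1 - 1 / 2 * t) ^ (-a) =
      2 ^ b * ∫ s in (0 : ℝ)..1, s ^ (b - 1) * (1 - s ^ 2) ^ ((a - b + 1) / 2 - 1) := by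
  set p := (a - b + 1) / 2 - 1
  have hsubst := intervalIntegral.integral_comp_mul_deriv_of_deriv_nonneg (a := 0) (b := 1)
    (f := fun s : ℝ ↦ 2 * s / (1 + s)) (f' := fun s ↦ 2 / (1 + s) ^ 2)
    (g := fun t ↦ t ^ (b - 1) * (1 - t) ^ p * (1 - 1 / 2 * t) ^ (-a))
    (fun s hs ↦ ?_) (fun s hs ↦ ?_) (fun s _ ↦ by positivity)
  · rw [show 2 * (0 : ℝ) / (1 + 0) = 0 by norm_num,
      show 2 * (1 : ℝ) / (1 + 1) = 1 by norm_num] at hsubst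
    rw [← hsubst, ← intervalIntegral.integral_const_mul]
    refine intervalIntegral.integral_congr_ae (.of_forall fun s hs ↦ ?_)
    rw [uIoc_of_le zero_le_one] at hs
    have hs0 : 0 < s := hs.1
    have hs1 : 0 ≤ 1 - s := sub_nonneg.mpr hs.2
    have h1s : 0 < 1 + s := by positivity
    have hexp : (1 + s) ^ a = (1 + s) ^ p * (1 + s) ^ p * ((1 + s) ^ (b - 1) * (1 + s) ^ 2) := by
      rw [← rpow_natCast, ← rpow_add h1s, ← rpow_add h1s, ← rpow_add h1s]
      congr 1
      push_cast
      ring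
    simp only [Function.comp_apply]
    rw [show 1 - 2 * s / (1 + s) = (1 - s) / (1 + s) by field_simp; ring,
      show 1 - 1 / 2 * (2 * s / (1 + s)) = (1 + s)⁻¹ by field_simp; ring,
      show 1 - s ^ 2 = (1 - s) * (1 + s) by ring, rpow_neg_eq_inv_rpow, inv_inv, hexp,
      div_rpow (by positivity) h1s.le, div_rpow hs1 h1s.le, mul_rpow zero_le_two hs0.le,
      mul_rpow hs1 h1s.le, rpow_sub_one two_ne_zero b]
    field_simp
  · have h1s : 1 + s ≠ 0 := by rw [uIcc_of_le zero_le_one] at hs; linarith [hs.1]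
    exact ContinuousAt.continuousWithinAt (by fun_prop (disch := assumption))
  · have h1s : 1 + s ≠ 0 := by rw [min_eq_left zero_le_one] at hs; linarith [hs.1]
    refine (((hasDerivAt_id' s).const_mul 2).div ((hasDerivAt_id' s).const_add 1)
      h1s).congr_deriv ?_
    ring

theorem hypF_one_half {a b : ℝ} (hb : 0 < b) (hba : b < a + 1) :
    hypF a b ((a + b + 1) / 2) (1 / 2) =
      √π * Gamma ((a + b + 1) / 2) / (Gamma ((a + 1) / 2) * Gamma ((b + 1) / 2)) := by
  have hv : 0 < (a - b + 1) / 2 := by linarith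
  have heuler := beta_mul_hypF_eq_integral a (c := (a + b + 1) / 2) (x := 1 / 2) hb (by linarith)
    (by norm_num [abs_of_pos])
  rw [show (a + b + 1) / 2 - b = (a - b + 1) / 2 by ring, integral_euler_one_half,
    integral_rpow_mul_one_sub_sq_rpow hb hv, beta, beta,
    show b + (a - b + 1) / 2 = (a + b + 1) / 2 by ring,
    show b / 2 + (a - b + 1) / 2 = (a + 1) / 2 by ring] at heuler
  have hdup : Gamma (b / 2) * Gamma ((b + 1) / 2) = Gamma b * 2 ^ (1 - b) * √π := by
    have h := Gamma_mul_Gamma_add_half (b / 2)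
    rwa [← add_div, mul_div_cancel₀ b two_ne_zero] at h
  have hGv := (Gamma_pos_of_pos hv).ne'
  have hGb := (Gamma_pos_of_pos hb).ne'
  have hGc := (Gamma_pos_of_pos (show 0 < (a + b + 1) / 2 by linarith)).ne'
  have hGa1 := (Gamma_pos_of_pos (show 0 < (a + 1) / 2 by linarith)).ne'
  have hGb1 := (Gamma_pos_of_pos (show 0 < (b + 1) / 2 by linarith)).ne'
  rw [rpow_sub two_pos, rpow_one] at hdup
  field_simp at heuler hdup ⊢
  refine mul_left_cancel₀ (mul_ne_zero hGb two_ne_zero) ?_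
  linear_combination Gamma ((b + 1) / 2) * heuler + Gamma ((a + b + 1) / 2) * hdup

theorem iteratedDeriv_hypF_one_half {a b : ℝ} (hb : 0 < b) (hba : b < a + 1) (n : ℕ) :
    iteratedDeriv n (hypF a b ((a + b + 1) / 2)) (1 / 2) =
      poch a n * poch b n * √π * Gamma ((a + b + 1) / 2) /
        (Gamma ((a + n + 1) / 2) * Gamma ((b + n + 1) / 2)) := by
  have hc : 0 < (a + b + 1) / 2 := by linarith
  have hshift : (a + b + 1) / 2 + n = (a + n + (b + n) + 1) / 2 := by ring
  have hpoch := (poch_pos n hc).ne'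
  rw [iteratedDeriv_hypF _ _ _ n (by norm_num [abs_of_pos]), hshift,
    hypF_one_half (by positivity) (by linarith), ← hshift, Gamma_add_natCast_eq_poch_mul n hc]
  field_simp

end GaussSecond

section HalfIntegerParameters

lemma Gamma_three_div_four : Gamma (3/4) = π * √2 / Gamma (1/4) := by
  have h := Gamma_mul_Gamma_one_sub (1/4)
  rw [show (1 : ℝ) - 1/4 = 3/4 by norm_num, mul_one_div, sin_pi_div_four] at h
  have hΓ := (Gamma_pos_of_pos (show (0 : ℝ) < 1/4 by norm_num)).ne'
  rw [eq_div_iff hΓ, mul_comm, h, div_div_eq_mul_div, mul_div_assoc, div_sqrt]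

lemma Gamma_seven_div_four : Gamma (7/4) = 3/4 * (π * √2 / Gamma (1/4)) := by
  rw [show (7/4 : ℝ) = 3/4 + 1 by norm_num, Gamma_add_one (by norm_num), Gamma_three_div_four]

lemma Gamma_nine_div_four : Gamma (9/4) = 5/16 * Gamma (1/4) := by
  rw [show (9/4 : ℝ) = 1/4 + 1 + 1 by norm_num, Gamma_add_one (by norm_num),
    Gamma_add_one (by norm_num)]
  ring

lemma pi_rpow_three_div_two : π ^ (3/2 : ℝ) = π * √π := by
  rw [show (3/2 : ℝ) = 1 + 1/2 by norm_num, rpow_add pi_pos, rpow_one, sqrt_eq_rpow]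

theorem iteratedDeriv_hypF_half_half_one (n : ℕ) :
    iteratedDeriv n (hypF (1/2) (1/2) 1) (1/2) =
      poch (1/2) n ^ 2 * √π / Gamma ((2 * n + 3) / 4) ^ 2 := by
  have h := iteratedDeriv_hypF_one_half (a := 1/2) (b := 1/2) (by norm_num) (by norm_num) n
  rw [show (1/2 + 1/2 + 1 : ℝ) / 2 = 1 by norm_num, Gamma_one,
    show (1/2 + n + 1 : ℝ) / 2 = (2 * n + 3) / 4 by ring] at h
  rw [h]
  ring

end HalfIntegerParameters

theorem z''_and_z'''_at_half :
    iteratedDeriv 2 (fun t => hypF (1/2) (1/2) 1 t) (1/2)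
        = Real.Gamma (1/4) ^ 2 / (2 * Real.pi ^ ((3 : ℝ)/2)) ∧
    iteratedDeriv 3 (fun t => hypF (1/2) (1/2) 1 t) (1/2)
        = 36 * Real.sqrt Real.pi / Real.Gamma (1/4) ^ 2 := by
  have hΓ := (Gamma_pos_of_pos (show (0 : ℝ) < 1/4 by norm_num)).ne'
  have hpoch2 : poch (1/2) 2 = 3/4 := by norm_num [poch, Finset.prod_range_succ]
  have hpoch3 : poch (1/2) 3 = 15/8 := by norm_num [poch, Finset.prod_range_succ]
  constructor
  · rw [iteratedDeriv_hypF_half_half_one, hpoch2, Nat.cast_ofNat,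
      show (2 * 2 + 3 : ℝ) / 4 = 7/4 by norm_num, Gamma_seven_div_four, pi_rpow_three_div_two]
    field_simp
    rw [sq_sqrt zero_le_two, sq_sqrt pi_pos.le]
  · rw [iteratedDeriv_hypF_half_half_one, hpoch3, Nat.cast_ofNat,
      show (2 * 3 + 3 : ℝ) / 4 = 9/4 by norm_num, Gamma_nine_div_four]
    field_simp
    norm_num
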